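/- Repelling petals exist at the parabolic fixed point of P_ω: there exist an open connected set V ⊆ ℂ with 0 in its frontier and a holomorphic injective map g : V → ℂ such that g(V) ⊆ V, P_ω^q(g(z)) = z for every z ∈ V (g is a local inverse branch of the q-th iterate P_ω^q), and the backward iterates converge to the fixed point: g^n(z) → 0 as n → ∞ for every z ∈ V. -/

import Mathlib

open Complex Filter Topology Set

/-- The quadratic polynomial `P_ω(z) = ω z + z²`. -/
noncomputable def Pq (ω : ℂ) : ℂ → ℂ := fun z => ω * z + z ^ 2

/-- The augmented parabolic basin `Λ̃_ω`: points whose orbit converges to `0`. -/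
def basinAug (ω : ℂ) : Set ℂ := {z | Tendsto (fun n => (Pq ω)^[n] z) atTop (𝓝 0)}

/-- The backward orbit of the parabolic fixed point `0`. -/
def preFixed (ω : ℂ) : Set ℂ := {z | ∃ n : ℕ, (Pq ω)^[n] z = 0}

/-- The parabolic basin `Λ_ω`. -/
def basin (ω : ℂ) : Set ℂ := basinAug ω \ preFixed ω

/-!
Let `F` be holomorphic near a fixed point `a` with multiplier `1`, and not the identity near `a`.
Its local inverse `g` then has the form `g z = z + (z - a) ^ (m + 1) * k z` with `m ≥ 1` and
`k a ≠ 0`. In the Fatou coordinate `φ z = c / (z - a) ^ m` with `c = -1 / (m * k a)`, the map `g` is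
asymptotic to the translation by `1`, so near `a` the real part of `φ` grows at rate at least
`1 / 2` along each segment from `z` to `g z`. The region `R < re φ` is therefore invariant under `g`
for large `R`, and `g` moves no point from one component to another: each component is a petal.

If `f` is entire and its multiplier at `a` is a `q`-th root of unity, this applies to `F = f^[q]`,
unless `f^[q]` is the identity near `a`, hence everywhere, which forces `f` to be injective.
-/

section Iteration

variable {X : Type*} {g : X → X} {S : Set X}

lemma tendsto_comp_iterate_atTop_of_add_le {h : X → ℝ} {d : ℝ} (hd : 0 < d)
    (hgS : MapsTo g S S) (hstep : ∀ z ∈ S, h z + d ≤ h (g z)) {z : X} (hz : z ∈ S) :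
    Tendsto (fun n => h (g^[n] z)) atTop atTop := by
  have hgrowth (n : ℕ) : h z + n * d ≤ h (g^[n] z) := by
    induction n with
    | zero => simp
    | succ n ih =>
      rw [Function.iterate_succ_apply']
      push_cast
      linarith [hstep _ (hgS.iterate n hz)]
  exact tendsto_atTop_mono hgrowth
    (tendsto_atTop_add_const_left _ _ (tendsto_natCast_atTop_atTop.atTop_mul_const hd))

lemma mapsTo_connectedComponentIn_of_joinedIn [TopologicalSpace X]
    (hjoin : ∀ z ∈ S, JoinedIn S z (g z)) (x : X) :
    MapsTo g (connectedComponentIn S x) (connectedComponentIn S x) := by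
  intro z hz
  have hzS := connectedComponentIn_subset S x hz
  rw [connectedComponentIn_eq hz]
  exact (isPathConnected_pathComponentIn hzS).isConnected.isPreconnected.subset_connectedComponentIn
    (mem_pathComponentIn_self hzS) pathComponentIn_subset (hjoin z hzS)

end Iteration

section NormalForm

variable {g : ℂ → ℂ} {a : ℂ}

lemma exists_eventually_eq_add_pow_mul (hg : AnalyticAt ℂ g a) (hga : g a = a)
    (hg' : deriv g a = 1) (hne : ¬ g =ᶠ[𝓝 a] id) :
    ∃ m ≠ 0, ∃ k : ℂ → ℂ, AnalyticAt ℂ k a ∧ k a ≠ 0 ∧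
      ∀ᶠ z in 𝓝 a, g z = z + (z - a) ^ (m + 1) * k z := by
  have hsub : AnalyticAt ℂ (fun z => g z - z) a := hg.sub analyticAt_id
  have hsub_ne : ¬ ∀ᶠ z in 𝓝 a, g z - z = 0 := fun h =>
    hne (h.mono fun z hz => sub_eq_zero.mp hz)
  obtain ⟨N, k, hk, hka, hgk⟩ := hsub.exists_eventuallyEq_pow_smul_nonzero_iff.mpr hsub_ne
  simp only [smul_eq_mul] at hgk
  have hN0 : N ≠ 0 := by
    rintro rfl
    exact hka (by simpa [hga] using hgk.self_of_nhds.symm)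
  have hN1 : N ≠ 1 := by
    rintro rfl
    have hder : HasDerivAt (fun z => g z - z) 0 a := by
      simpa [hg'] using hg.differentiableAt.hasDerivAt.fun_sub (hasDerivAt_id a)
    have hder' : HasDerivAt (fun z => (z - a) ^ 1 * k z) (k a) a := by
      simpa using ((hasDerivAt_id a).sub_const a).fun_mul hk.differentiableAt.hasDerivAt
    exact hka ((hder'.congr_of_eventuallyEq hgk).unique hder)
  obtain ⟨m, rfl⟩ := Nat.exists_eq_succ_of_ne_zero hN0
  exact ⟨m, by simpa using hN1, k, hk, hka, hgk.mono fun z hz => by rw [← hz]; ring⟩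

end NormalForm

section FatouCoordinate

/-- The (approximate) Fatou coordinate `c / (z - a) ^ m`, in which a map tangent to the identity
to order `m + 1` at `a` becomes close to a translation. For `m ≠ 0` its value at `a` is the junk
value `0`. -/
noncomputable def fatouCoord (a : ℂ) (m : ℕ) (c z : ℂ) : ℂ := c / (z - a) ^ m

/-- The region where the Fatou coordinate has real part greater than `R`. For `c ≠ 0`, `m ≠ 0`
and `R ≥ 0` its components are `m` petal-shaped domains permuted by rotations about `a`. -/
def petalRegion (a : ℂ) (m : ℕ) (c : ℂ) (R : ℝ) : Set ℂ := {z | R < (fatouCoord a m c z).re}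

variable {a c : ℂ} {m : ℕ} {R : ℝ}

lemma norm_sub_lt_of_mem_petalRegion {t : ℝ} (ht : 0 < t) {z : ℂ}
    (hz : z ∈ petalRegion a m c (‖c‖ / t ^ m)) : ‖z - a‖ < t := by
  by_contra! htz
  refine (show ‖c‖ / t ^ m < (fatouCoord a m c z).re from hz).not_ge ?_
  calc (fatouCoord a m c z).re ≤ ‖fatouCoord a m c z‖ := re_le_norm _
    _ = ‖c‖ / ‖z - a‖ ^ m := by rw [fatouCoord, norm_div, norm_pow]
    _ ≤ ‖c‖ / t ^ m := by gcongr

lemma tendsto_of_tendsto_re_fatouCoord_atTop {ι : Type*} {l : Filter ι} {u : ι → ℂ}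
    (h : Tendsto (fun i => (fatouCoord a m c (u i)).re) l atTop) : Tendsto u l (𝓝 a) := by
  refine Metric.tendsto_nhds.mpr fun ε hε => ?_
  filter_upwards [h.eventually_gt_atTop (‖c‖ / ε ^ m)] with i hi
  rw [dist_eq_norm]
  exact norm_sub_lt_of_mem_petalRegion hε hi

lemma exists_petalRegion_subset {U : Set ℂ} (hU : U ∈ 𝓝 a) :
    ∃ R, 0 ≤ R ∧ petalRegion a m c R ⊆ U := by
  obtain ⟨t, ht, htU⟩ := Metric.mem_nhds_iff.mp hU
  refine ⟨‖c‖ / t ^ m, by positivity, fun z hz => htU ?_⟩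
  rw [mem_ball_iff_norm]
  exact norm_sub_lt_of_mem_petalRegion ht hz

lemma notMem_petalRegion_self (hm : m ≠ 0) (hR : 0 ≤ R) : a ∉ petalRegion a m c R := by
  simpa [petalRegion, fatouCoord, hm] using hR

lemma isOpen_petalRegion (hm : m ≠ 0) (hR : 0 ≤ R) : IsOpen (petalRegion a m c R) := by
  refine isOpen_iff_mem_nhds.mpr fun z hz => ?_
  have hza : z - a ≠ 0 :=
    sub_ne_zero.mpr fun h => notMem_petalRegion_self hm hR (h ▸ hz)
  have hcont : ContinuousAt (fun w => (fatouCoord a m c w).re) z := by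
    unfold fatouCoord
    fun_prop (disch := exact pow_ne_zero m hza)
  exact hcont.eventually_const_lt hz

lemma petalRegion_nonempty (hm : m ≠ 0) (hc : c ≠ 0) (R : ℝ) :
    (petalRegion a m c R).Nonempty := by
  obtain ⟨w, hw⟩ := IsAlgClosed.exists_pow_nat_eq (c / ((R + 1 : ℝ) : ℂ)) (Nat.pos_of_ne_zero hm)
  refine ⟨a + w, ?_⟩
  rw [petalRegion, mem_ofPred_eq, fatouCoord, add_sub_cancel_left, hw, div_div_cancel₀ hc,
    ofReal_re]
  exact lt_add_one R

end FatouCoordinate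

section StepEstimate

/-- The difference quotient `((1 + u)⁻ᵐ - 1) / u`, with the derivative `-m` as its value at `u = 0`.
It is the exact factor in the displacement of the Fatou coordinate. -/
noncomputable def invPowSlope (m : ℕ) : ℂ → ℂ := dslope (fun u : ℂ => ((1 + u) ^ m)⁻¹) 0

lemma hasDerivAt_inv_one_add_pow (m : ℕ) :
    HasDerivAt (fun u : ℂ => ((1 + u) ^ m)⁻¹) (-m) 0 := by
  simpa using (((hasDerivAt_id (0 : ℂ)).const_add 1).fun_pow m).fun_inv (by simp)

lemma invPowSlope_zero (m : ℕ) : invPowSlope m 0 = -m := by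
  rw [invPowSlope, dslope_same, (hasDerivAt_inv_one_add_pow m).deriv]

lemma continuousAt_invPowSlope_zero (m : ℕ) : ContinuousAt (invPowSlope m) 0 :=
  continuousAt_dslope_same.mpr (hasDerivAt_inv_one_add_pow m).differentiableAt

lemma inv_one_add_pow_eq (m : ℕ) (u : ℂ) : ((1 + u) ^ m)⁻¹ = 1 + u * invPowSlope m u := by
  have h := sub_smul_dslope (fun u : ℂ => ((1 + u) ^ m)⁻¹) 0 u
  simp only [sub_zero, smul_eq_mul, add_zero, one_pow, inv_one] at h
  rw [invPowSlope, h, add_sub_cancel]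

variable {g k : ℂ → ℂ} {a c : ℂ} {m : ℕ}

lemma fatouCoord_add_pow_mul {z : ℂ} (hz : z ≠ a) (b : ℂ) :
    fatouCoord a m c (z + (z - a) ^ (m + 1) * b) =
      fatouCoord a m c z + c * b * invPowSlope m ((z - a) ^ m * b) := by
  have hfactor : z + (z - a) ^ (m + 1) * b - a = (z - a) * (1 + (z - a) ^ m * b) := by ring
  calc fatouCoord a m c (z + (z - a) ^ (m + 1) * b)
      = c / (z - a) ^ m * ((1 + (z - a) ^ m * b) ^ m)⁻¹ := by
        rw [fatouCoord, hfactor, mul_pow, ← div_div, div_eq_mul_inv _ ((1 + _) ^ m)]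
    _ = fatouCoord a m c z + c * b * invPowSlope m ((z - a) ^ m * b) := by
        rw [inv_one_add_pow_eq, fatouCoord]
        field_simp [sub_ne_zero.mpr hz]

-- Compactness of `[0, 1]` makes the neighbourhood of `a` uniform in `s`.
lemma eventually_forall_half_lt_re_mul_invPowSlope (hm : m ≠ 0) (hk : ContinuousAt k a)
    (hck : c * k a * m = -1) :
    ∀ᶠ z in 𝓝 a, ∀ s ∈ Icc (0 : ℝ) 1,
      1 / 2 < (c * k z * invPowSlope m ((z - a) ^ m * (s * k z))).re := by
  refine isCompact_Icc.eventually_forall_of_forall_eventually fun s _ => ?_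
  have hk_fst : ContinuousAt (fun x : ℂ × ℝ => k x.1) (a, s) := hk.comp' continuousAt_fst
  have hslope : ContinuousAt
      (fun x : ℂ × ℝ => invPowSlope m ((x.1 - a) ^ m * (x.2 * k x.1))) (a, s) := by
    refine ContinuousAt.comp' (g := invPowSlope m) ?_ (by fun_prop)
    simpa [hm] using continuousAt_invPowSlope_zero m
  refine (continuous_re.continuousAt.comp'
    ((continuousAt_const.mul hk_fst).mul hslope)).eventually_const_lt ?_
  norm_num [hm, invPowSlope_zero, hck]

lemma eventually_re_fatouCoord_add_le (hm : m ≠ 0) (hk : ContinuousAt k a)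
    (hck : c * k a * m = -1) (hgk : ∀ᶠ z in 𝓝 a, g z = z + (z - a) ^ (m + 1) * k z) :
    ∀ᶠ z in 𝓝 a, z ≠ a → ∀ s ∈ Icc (0 : ℝ) 1,
      (fatouCoord a m c z).re + s / 2 ≤ (fatouCoord a m c (AffineMap.lineMap z (g z) s)).re := by
  filter_upwards [eventually_forall_half_lt_re_mul_invPowSlope hm hk hck, hgk]
    with z hspeed hgz hza s hs
  have hline : AffineMap.lineMap z (g z) s = z + (z - a) ^ (m + 1) * (s * k z) := by
    rw [AffineMap.lineMap_apply_module', hgz, real_smul]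
    ring
  rw [hline, fatouCoord_add_pow_mul hza, add_re, mul_left_comm, mul_assoc, re_ofReal_mul,
    div_eq_mul_one_div]
  gcongr
  · exact hs.1
  · exact (hspeed s hs).le

end StepEstimate

section AttractingPetal

/-- `V` is an attracting petal of `g` at `a`: a forward-invariant domain with `a` on its frontier,
all of whose orbits converge to `a`. -/
structure IsAttractingPetal (g : ℂ → ℂ) (a : ℂ) (V : Set ℂ) : Prop where
  isOpen : IsOpen V
  isConnected : IsConnected V
  mem_frontier : a ∈ frontier V
  mapsTo : MapsTo g V V
  tendsto_iterate : ∀ z ∈ V, Tendsto (fun n => g^[n] z) atTop (𝓝 a)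

variable {g : ℂ → ℂ} {a : ℂ}

lemma isAttractingPetal_connectedComponentIn_petalRegion {c x : ℂ} {m : ℕ} {R : ℝ} (hm : m ≠ 0)
    (hR : 0 ≤ R) (hx : x ∈ petalRegion a m c R)
    (hstep : ∀ z ∈ petalRegion a m c R, ∀ s ∈ Icc (0 : ℝ) 1,
      (fatouCoord a m c z).re + s / 2 ≤ (fatouCoord a m c (AffineMap.lineMap z (g z) s)).re) :
    IsAttractingPetal g a (connectedComponentIn (petalRegion a m c R) x) := by
  set S := petalRegion a m c R
  have hsegment : ∀ z ∈ S, segment ℝ z (g z) ⊆ S := by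
    intro z hz
    rw [segment_eq_image_lineMap]
    rintro _ ⟨s, hs, rfl⟩
    exact (lt_of_lt_of_le hz (by linarith [hs.1])).trans_le (hstep z hz s hs)
  have hmaps : MapsTo g S S := fun z hz => hsegment z hz (right_mem_segment ℝ z (g z))
  have hconv : ∀ z ∈ S, Tendsto (fun n => g^[n] z) atTop (𝓝 a) := fun z hz =>
    tendsto_of_tendsto_re_fatouCoord_atTop <|
      tendsto_comp_iterate_atTop_of_add_le (h := fun w => (fatouCoord a m c w).re) one_half_pos
        hmaps (fun w hw => by simpa using hstep w hw 1 (right_mem_Icc.mpr zero_le_one)) hz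
  have hmaps_component := mapsTo_connectedComponentIn_of_joinedIn
    (fun z hz => JoinedIn.of_segment_subset (hsegment z hz)) x
  have hopen : IsOpen (connectedComponentIn S x) :=
    (isOpen_petalRegion hm hR).connectedComponentIn
  have hsub := connectedComponentIn_subset S x
  refine ⟨hopen, isConnected_connectedComponentIn_iff.mpr hx, ?_, hmaps_component,
    fun z hz => hconv z (hsub hz)⟩
  rw [hopen.frontier_eq]
  exact ⟨mem_closure_of_tendsto (hconv x hx)
      (.of_forall fun n => hmaps_component.iterate n (mem_connectedComponentIn hx)),
    fun ha => notMem_petalRegion_self hm hR (hsub ha)⟩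

theorem exists_isAttractingPetal_subset (hg : AnalyticAt ℂ g a) (hga : g a = a)
    (hg' : deriv g a = 1) (hne : ¬ g =ᶠ[𝓝 a] id) {U : Set ℂ} (hU : U ∈ 𝓝 a) :
    ∃ V ⊆ U, IsAttractingPetal g a V := by
  obtain ⟨m, hm, k, hk, hka, hgk⟩ := exists_eventually_eq_add_pow_mul hg hga hg' hne
  have hm' : (m : ℂ) ≠ 0 := Nat.cast_ne_zero.mpr hm
  obtain ⟨c, hck⟩ : ∃ c, c * k a * m = -1 := ⟨-1 / (k a * m), by field_simp⟩
  have hc : c ≠ 0 := by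
    rintro rfl
    simp at hck
  obtain ⟨R, hR, hsub⟩ := exists_petalRegion_subset (m := m) (c := c)
    (inter_mem hU (eventually_re_fatouCoord_add_le hm hk.continuousAt hck hgk))
  obtain ⟨x, hx⟩ := petalRegion_nonempty (a := a) hm hc R
  refine ⟨_, fun z hz => (hsub (connectedComponentIn_subset _ x hz)).1,
    isAttractingPetal_connectedComponentIn_petalRegion hm hR hx fun z hz => (hsub hz).2 ?_⟩
  rintro rfl
  exact notMem_petalRegion_self hm hR hz

end AttractingPetal

section RepellingPetal

/-- `V` is a repelling petal of `F` at `a`, with `g` the inverse branch of `F` that contracts `V`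
towards `a`. -/
structure IsRepellingPetal (F : ℂ → ℂ) (a : ℂ) (g : ℂ → ℂ) (V : Set ℂ) : Prop
    extends IsAttractingPetal g a V where
  differentiableAt : ∀ z ∈ V, DifferentiableAt ℂ g z
  leftInvOn : LeftInvOn F g V

variable {F f : ℂ → ℂ} {a : ℂ}

lemma exists_analyticAt_rightInverse (hF : AnalyticAt ℂ F a) (hFa : F a = a)
    (hF' : deriv F a ≠ 0) :
    ∃ g : ℂ → ℂ, AnalyticAt ℂ g a ∧ g a = a ∧ deriv g a = (deriv F a)⁻¹ ∧
      ∀ᶠ z in 𝓝 a, F (g z) = z := by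
  have hstrict := hF.hasStrictDerivAt
  have hga := (hstrict.eventually_left_inverse hF').self_of_nhds
  have hg := hF.analyticAt_localInverse hF'
  have hg' := (hstrict.to_localInverse hF').hasDerivAt.deriv
  have hFg := hstrict.eventually_right_inverse hF'
  rw [hFa] at hga hg hg' hFg
  exact ⟨_, hg, hga, hg', hFg⟩

theorem exists_isRepellingPetal (hF : AnalyticAt ℂ F a) (hFa : F a = a) (hF' : deriv F a = 1)
    (hne : ¬ F =ᶠ[𝓝 a] id) : ∃ V g, IsRepellingPetal F a g V := by
  obtain ⟨g, hg, hga, hg', hFg⟩ :=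
    exists_analyticAt_rightInverse hF hFa (hF' ▸ one_ne_zero)
  have hgne : ¬ g =ᶠ[𝓝 a] id := fun hid => hne <| by
    filter_upwards [hid, hFg] with z hgz hFgz
    rwa [hgz] at hFgz
  obtain ⟨V, hVU, hV⟩ := exists_isAttractingPetal_subset hg hga (by rw [hg', hF', inv_one]) hgne
    (inter_mem hg.eventually_analyticAt hFg)
  exact ⟨V, g, hV, fun z hz => (hVU hz).1.differentiableAt, fun z hz => (hVU hz).2⟩

lemma injective_of_iterate_eventuallyEq_id (hf : Differentiable ℂ f) {q : ℕ} (hq : q ≠ 0)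
    (hid : f^[q] =ᶠ[𝓝 a] id) : Function.Injective f := by
  have hglobal : f^[q] = id :=
    AnalyticOnNhd.eq_of_eventuallyEq (fun z _ => (hf.iterate q).analyticAt z)
      (fun _ _ => analyticAt_id) hid
  obtain ⟨j, rfl⟩ := Nat.exists_eq_succ_of_ne_zero hq
  rw [Function.iterate_succ] at hglobal
  exact .of_comp (hglobal ▸ Function.injective_id)

theorem repelling_petal_exists_general (hf : Differentiable ℂ f) (hfa : f a = a) {q : ℕ}
    (hq : q ≠ 0) (hmult : deriv f a ^ q = 1) (hinj : ¬ Function.Injective f) :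
    ∃ V g, IsRepellingPetal f^[q] a g V := by
  refine exists_isRepellingPetal ((hf.iterate q).analyticAt a) (Function.iterate_fixed hfa q) ?_
    fun hid => hinj (injective_of_iterate_eventuallyEq_id hf hq hid)
  rw [((hf a).hasDerivAt.iterate a hfa q).deriv, hmult]

end RepellingPetal

section Quadratic

lemma differentiable_Pq (ω : ℂ) : Differentiable ℂ (Pq ω) := by
  unfold Pq
  fun_prop

lemma Pq_zero (ω : ℂ) : Pq ω 0 = 0 := by simp [Pq]

lemma deriv_Pq_zero (ω : ℂ) : deriv (Pq ω) 0 = ω := by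
  have h := ((hasDerivAt_id (0 : ℂ)).const_mul ω).fun_add ((hasDerivAt_id (0 : ℂ)).fun_pow 2)
  simpa using (show HasDerivAt (Pq ω) _ 0 from h).deriv

lemma not_injective_Pq (ω : ℂ) : ¬ Function.Injective (Pq ω) := by
  intro hinj
  have heq : Pq ω (-ω / 2 + 1) = Pq ω (-ω / 2 - 1) := by
    unfold Pq
    ring
  have := hinj heq
  norm_num [sub_eq_add_neg] at this

end Quadratic

/-- Repelling petals exist at the parabolic fixed point of
`P_ω`: there are an open connected set `V` with `0` on its frontier and a
holomorphic injective map `g : V → ℂ` with `g(V) ⊆ V` which is an inverse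
branch of `P_ω^[q]` on `V`, whose backward iterates converge to `0`. -/
theorem repelling_petal_exists
    (p q : ℕ) (hq : 2 ≤ q) (hp0 : 0 < p) (hpq : p < q) (hcop : Nat.Coprime p q)
    (ω : ℂ) (hω : ω = Complex.exp (2 * Real.pi * Complex.I * (p : ℂ) / (q : ℂ))) :
    ∃ (V : Set ℂ) (g : ℂ → ℂ),
      IsOpen V ∧ IsConnected V ∧ (0 : ℂ) ∈ frontier V ∧
      (∀ z ∈ V, DifferentiableAt ℂ g z) ∧
      Set.InjOn g V ∧
      g '' V ⊆ V ∧
      (∀ z ∈ V, (Pq ω)^[q] (g z) = z) ∧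
      (∀ z ∈ V, Tendsto (fun n => g^[n] z) atTop (𝓝 0)) := by
  have hq0 : q ≠ 0 := by lia
  have hωq : ω ^ q = 1 := by
    rw [hω, mul_div_assoc]
    exact (Complex.isPrimitiveRoot_exp_of_coprime p q hq0 hcop).pow_eq_one
  obtain ⟨V, g, hV⟩ := repelling_petal_exists_general (differentiable_Pq ω) (Pq_zero ω) hq0
    (by rwa [deriv_Pq_zero]) (not_injective_Pq ω)
  exact ⟨V, g, hV.isOpen, hV.isConnected, hV.mem_frontier, hV.differentiableAt,
    hV.leftInvOn.injOn, hV.mapsTo.image_subset, hV.leftInvOn, hV.tendsto_iterate⟩
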